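/- Fix an integer k ≥ 3, let S = (S_1, S_2, S_3) be the tuple of 5×5 real diagonal matrices S_1 = diag(1, 0, −1/(k−1), 0, 0), S_2 = diag(0, 1, −1/(k−1), 0, 0), S_3 = diag(0, 0, 0, −1, 1), and let A(k) be as defined. Then for every γ ∈ ℝ the following are equivalent: (i) for every θ ∈ [0, π/2], the triple (diag(1,−k), diag(−k,1), X_3(θ)) belongs to level 2 of γ·W^min(D_S^ℝ(1)); (ii) every tuple in D_{A(k)}^ℝ(2) belongs to level 2 of γ·W^min(D_{A(k)}^ℝ(1)). -/

import Mathlib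

open Matrix
open scoped Kronecker Pointwise

/-- Membership in the `n`-th level of the real free spectrahedron determined by the tuple `A`. -/
def memLevel {g : ℕ} {d n : Type*} [Fintype d] [DecidableEq d] [Fintype n] [DecidableEq n]
    (A : Fin g → Matrix d d ℝ) (X : Fin g → Matrix n n ℝ) : Prop :=
  (∀ j, (X j).IsSymm) ∧
    ((1 : Matrix (d × n) (d × n) ℝ) - ∑ j, A j ⊗ₖ X j).PosSemidef

/-- The defining tuple `A(k)`: `A_j(k) = diag(δ_{1j},…,δ_{kj}, −1, 0, 0)` for `j ≤ k` and
`A_{k+1}(k) = diag(0,…,0, −1, 1)` (with `k+1` zeros). -/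
noncomputable def Amat (k : ℕ) (j : Fin (k + 1)) : Matrix (Fin (k + 3)) (Fin (k + 3)) ℝ :=
  Matrix.diagonal fun i =>
    if (j : ℕ) < k then
      (if (i : ℕ) = (j : ℕ) then 1 else if (i : ℕ) = k then -1 else 0)
    else
      (if (i : ℕ) = k + 1 then -1 else if (i : ℕ) = k + 2 then 1 else 0)

/-- The tuple `S = (S_1, S_2, S_3)` of 5×5 real diagonal matrices. -/
noncomputable def Smat (k : ℕ) : Fin 3 → Matrix (Fin 5) (Fin 5) ℝ
  | 0 => Matrix.diagonal ![1, 0, -(1 / ((k : ℝ) - 1)), 0, 0]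
  | 1 => Matrix.diagonal ![0, 1, -(1 / ((k : ℝ) - 1)), 0, 0]
  | 2 => Matrix.diagonal ![0, 0, 0, -1, 1]

/-- Level one of the real free spectrahedron `D_A^ℝ(1)`, viewed as a subset of `ℝ^g`. -/
def level1 {g d : ℕ} (A : Fin g → Matrix (Fin d) (Fin d) ℝ) : Set (Fin g → ℝ) :=
  {x | ((1 : Matrix (Fin d) (Fin d) ℝ) - ∑ j, x j • A j).PosSemidef}

/-- Membership in level `n` of the minimal matrix convex set `W^min(K)`:
`X_j = Σ_i x_j^{(i)} P_i` where `x^{(i)} ∈ K` and the `P_i` are PSD with `Σ_i P_i = I`. -/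
def memWmin {g : ℕ} (K : Set (Fin g → ℝ)) {n : ℕ}
    (X : Fin g → Matrix (Fin n) (Fin n) ℝ) : Prop :=
  ∃ (s : ℕ) (x : Fin s → Fin g → ℝ) (P : Fin s → Matrix (Fin n) (Fin n) ℝ),
    1 ≤ s ∧ (∀ i, x i ∈ K) ∧ (∀ i, (P i).PosSemidef) ∧ (∑ i, P i = 1) ∧
    ∀ j, X j = ∑ i, x i j • P i

/-- The matrix `X_3(θ) = [[cos θ, sin θ],[sin θ, −cos θ]]`. -/
noncomputable def X3 (θ : ℝ) : Matrix (Fin 2) (Fin 2) ℝ :=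
  !![Real.cos θ, Real.sin θ; Real.sin θ, -Real.cos θ]

/-!
The convex set `D_{A(k)}(1)` is the product of a `k`-simplex and the interval `[-1, 1]`. In
barycentric coordinates, a tuple in `D_{A(k)}(n)` is a resolution of the identity `E` with `k + 1`
effects together with a symmetric contraction `Y`. It lies in the minimal matrix convex set as soon
as `Y` is a sum of matrices from the intervals `[-E i, E i]`, which gives positive weights to the
vertices of the prism. Scaling by `t = γ⁻¹` turns `E i` into the noisy effect `t • E i + b • 1`
with `b = (1 - t) / (k + 1)`, and `Y` into `t • Y`.

For `2 × 2` matrices and `t > 0` it is enough to split multiples of the reflections `X3 θ`. The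
summands are affine functions of the effects, so it suffices to dominate them on the extreme effects
`0`, `1` and the rank one projections. This reaches the multiple `(k - 1) b + 2 √(b (b + t))`.
Conversely, the triple with `θ = π / 2` needs this multiple to be at least `t`: its effects are
diagonal, with entries `(b, b + t)`, `(b + t, b)` and `((k - 1) b, (k - 1) b)`, so the off-diagonal
entries of the summands are at most `√(b (b + t))` twice and `(k - 1) b`.
-/

section LoewnerOrder

open scoped MatrixOrder

section DiagonalPencils

theorem diagonal_le_one {n : Type*} [DecidableEq n] {d : n → ℝ} (hd : ∀ i, d i ≤ 1) :
    diagonal d ≤ 1 := by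
  rw [← diagonal_one, le_iff, diagonal_sub, posSemidef_diagonal_iff]
  exact fun i => sub_nonneg.2 (hd i)

theorem posSemidef_blockDiagonal_iff {ι n : Type*} [Finite ι] [DecidableEq ι] [Finite n]
    {M : ι → Matrix n n ℝ} : (blockDiagonal M).PosSemidef ↔ ∀ i, (M i).PosSemidef := by
  classical
  cases nonempty_fintype ι
  cases nonempty_fintype n
  refine ⟨fun h i => ?_, fun h => ?_⟩
  · have hblock : (blockDiagonal M).submatrix (·, i) (·, i) = M i := by
      ext u v
      simp
    exact hblock ▸ h.submatrix (·, i)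
  · choose B hB using fun i => CStarAlgebra.nonneg_iff_eq_star_mul_self.1 (h i).nonneg
    rw [funext hB, blockDiagonal_mul]
    simp only [star_eq_conjTranspose, ← blockDiagonal_conjTranspose]
    exact posSemidef_conjTranspose_mul_self _

variable {ι n : Type*} [Fintype ι] [DecidableEq ι] [Fintype n] [DecidableEq n] {g : ℕ}

theorem memLevel_iff_of_isDiag {A : Fin g → Matrix ι ι ℝ} (hA : ∀ j, (A j).IsDiag)
    {X : Fin g → Matrix n n ℝ} :
    memLevel A X ↔ (∀ j, (X j).IsSymm) ∧ ∀ i, 0 ≤ 1 - ∑ j, A j i i • X j := by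
  have hpencil : (1 : Matrix (ι × n) (ι × n) ℝ) - ∑ j, A j ⊗ₖ X j =
      (blockDiagonal fun i => 1 - ∑ j, A j i i • X j).submatrix Prod.swap Prod.swap := by
    ext ⟨a, u⟩ ⟨b, v⟩
    rcases eq_or_ne a b with rfl | hab
    · simp [Matrix.sum_apply, Matrix.one_apply]
    · simp [Matrix.sum_apply, blockDiagonal_apply, hab, fun j => hA j hab]
  unfold memLevel
  simp only [hpencil, nonneg_iff_posSemidef, ← posSemidef_blockDiagonal_iff]
  exact and_congr_right' (posSemidef_submatrix_equiv (Equiv.prodComm ι n))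

theorem mem_level1_iff_of_isDiag {d : ℕ} {A : Fin g → Matrix (Fin d) (Fin d) ℝ}
    (hA : ∀ j, (A j).IsDiag) {x : Fin g → ℝ} :
    x ∈ level1 A ↔ ∀ i, 0 ≤ 1 - ∑ j, A j i i • x j := by
  have hpencil : (1 : Matrix (Fin d) (Fin d) ℝ) - ∑ j, x j • A j =
      diagonal fun i => 1 - ∑ j, A j i i • x j := by
    ext a b
    rcases eq_or_ne a b with rfl | hab
    · simp [Matrix.sum_apply, mul_comm]
    · simp [Matrix.sum_apply, hab, fun j => hA j hab]
  rw [level1, Set.mem_ofPred_eq, hpencil, posSemidef_diagonal_iff]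

end DiagonalPencils

section MinimalMatrixConvexSets

variable {g h n : ℕ} {K : Set (Fin g → ℝ)} {X : Fin g → Matrix (Fin n) (Fin n) ℝ}

theorem memWmin_of_fintype {ι : Type*} [Fintype ι] [Nonempty ι] {x : ι → Fin g → ℝ}
    {P : ι → Matrix (Fin n) (Fin n) ℝ} (hx : ∀ i, x i ∈ K) (hP : ∀ i, 0 ≤ P i)
    (hsum : ∑ i, P i = 1) (hX : ∀ j, X j = ∑ i, x i j • P i) : memWmin K X := by
  let e := (Fintype.equivFin ι).symm
  refine ⟨Fintype.card ι, x ∘ e, P ∘ e, Fintype.card_pos, fun i => hx _,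
    fun i => nonneg_iff_posSemidef.1 (hP _), ?_, fun j => ?_⟩
  · rw [← hsum]
    exact e.sum_comp P
  · rw [hX]
    exact (e.sum_comp fun i => x i j • P i).symm

theorem memWmin.comp (hX : memWmin K X) {L : Set (Fin h → ℝ)} (e : Fin h → Fin g)
    (hKL : ∀ x ∈ K, x ∘ e ∈ L) : memWmin L (X ∘ e) := by
  obtain ⟨s, x, P, hs, hx, hP, hsum, hX⟩ := hX
  exact ⟨s, fun i => x i ∘ e, P, hs, fun i => hKL _ (hx i), hP, hsum, fun j => hX (e j)⟩

theorem memWmin.smul (hX : memWmin K X) (c : ℝ) : memWmin (c • K) (c • X) := by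
  obtain ⟨s, x, P, hs, hx, hP, hsum, hX⟩ := hX
  refine ⟨s, fun i => c • x i, P, hs, fun i => Set.smul_mem_smul_set (hx i), hP, hsum, fun j => ?_⟩
  simp only [Pi.smul_apply, hX, Finset.smul_sum, smul_assoc]

theorem memWmin_smul_iff {c : ℝ} (hc : c ≠ 0) : memWmin (c • K) X ↔ memWmin K (c⁻¹ • X) := by
  refine ⟨fun hX => ?_, fun hX => ?_⟩
  · simpa only [inv_smul_smul₀ hc] using hX.smul c⁻¹
  · simpa only [smul_inv_smul₀ hc] using hX.smul c

theorem memWmin.eq_zero_of_zero_smul (hX : memWmin ((0 : ℝ) • K) X) : X = 0 := by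
  obtain ⟨s, x, P, -, hx, -, -, hX⟩ := hX
  have hx0 (i) : x i = 0 := Set.zero_smul_set_subset K (hx i)
  ext1 j
  simp [hX, hx0]

theorem memWmin.exists_positive_unital_map (hX : memWmin K X) :
    ∃ Φ : ((Fin g → ℝ) → ℝ) →ₗ[ℝ] Matrix (Fin n) (Fin n) ℝ,
      (∀ f, (∀ x ∈ K, 0 ≤ f x) → 0 ≤ Φ f) ∧ Φ 1 = 1 ∧ ∀ j, Φ (fun x => x j) = X j := by
  obtain ⟨s, x, P, -, hx, hP, hsum, hX⟩ := hX
  refine ⟨∑ i, (LinearMap.proj (x i)).smulRight (P i), fun f hf => ?_, ?_, fun j => ?_⟩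
  · simp only [LinearMap.sum_apply, LinearMap.smulRight_apply, LinearMap.proj_apply]
    exact Finset.sum_nonneg fun i _ => smul_nonneg (hf _ (hx i)) (nonneg_iff_posSemidef.2 (hP i))
  · simpa using hsum
  · simp [hX]

end MinimalMatrixConvexSets

section IntervalSums

section OrderedModules

variable {M : Type*} [AddCommGroup M] [PartialOrder M] [IsOrderedAddMonoid M] [Module ℝ M]
  [PosSMulMono ℝ M] {F G Z : M}

theorem nonneg_of_mem_Icc_neg (hZ : Z ∈ Set.Icc (-F) F) : 0 ≤ F := by
  have hdouble : 0 ≤ F + F := neg_le_iff_add_nonneg.1 (hZ.1.trans hZ.2)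
  have hF : F = (2⁻¹ : ℝ) • (F + F) := by module
  rw [hF]
  exact smul_nonneg (by norm_num) hdouble

theorem smul_mem_Icc_neg {r : ℝ} (hZ : Z ∈ Set.Icc (-F) F) (hFG : |r| • F ≤ G) :
    r • Z ∈ Set.Icc (-G) G := by
  have hle : |r| • Z ≤ G := (smul_le_smul_of_nonneg_left hZ.2 (abs_nonneg r)).trans hFG
  have hge : -(|r| • Z) ≤ G := by
    rw [← smul_neg]
    exact (smul_le_smul_of_nonneg_left (neg_le.1 hZ.1) (abs_nonneg r)).trans hFG
  rcases abs_choice r with hr | hr <;> rw [hr] at hle hge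
  · exact ⟨neg_le.1 hge, hle⟩
  · exact ⟨neg_le.1 (by simpa using hle), by simpa using hge⟩

end OrderedModules

variable {ι n : Type*} [Fintype ι]

/-- The Minkowski sum of the intervals `[-F i, F i]` of the Loewner order. -/
def intervalSum (F : ι → Matrix n n ℝ) : Set (Matrix n n ℝ) :=
  ∑ i, Set.Icc (-F i) (F i)

variable {F : ι → Matrix n n ℝ} {W : Matrix n n ℝ}

theorem mem_intervalSum_iff :
    W ∈ intervalSum F ↔
      ∃ Z : ι → Matrix n n ℝ, (∀ i, Z i ∈ Set.Icc (-F i) (F i)) ∧ ∑ i, Z i = W := by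
  simp only [intervalSum, Set.mem_fintype_sum, exists_prop]

theorem sum_mem_intervalSum (hF : ∀ i, 0 ≤ F i) : ∑ i, F i ∈ intervalSum F :=
  mem_intervalSum_iff.2 ⟨F, fun i => ⟨neg_le_self (hF i), le_rfl⟩, rfl⟩

theorem isSymm_of_mem_Icc_neg {F Z : Matrix n n ℝ} (hZ : Z ∈ Set.Icc (-F) F) : Z.IsSymm := by
  ext u v
  have h₁ := (le_iff.1 hZ.2).1.apply u v
  have h₂ := (le_iff.1 hZ.1).1.apply u v
  simp only [Matrix.sub_apply, Matrix.neg_apply, star_trivial] at h₁ h₂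
  simp only [transpose_apply]
  linarith

theorem map_sum_mul_mem_intervalSum {V : Type*} {K : Set V} {Φ : (V → ℝ) →ₗ[ℝ] Matrix n n ℝ}
    (hΦ : ∀ f, (∀ x ∈ K, 0 ≤ f x) → 0 ≤ Φ f) {f : ι → V → ℝ} (hf : ∀ i, ∀ x ∈ K, 0 ≤ f i x)
    {p : V → ℝ} (hp : ∀ x ∈ K, p x ∈ Set.Icc (-1) 1) :
    Φ ((∑ i, f i) * p) ∈ intervalSum fun i => Φ (f i) := by
  refine mem_intervalSum_iff.2 ⟨fun i => Φ (f i * p), fun i => ⟨?_, ?_⟩, ?_⟩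
  · rw [neg_le_iff_add_nonneg, ← map_add]
    exact hΦ _ fun x hx => by
      simp only [Pi.add_apply, Pi.mul_apply]
      nlinarith [hf i x hx, (hp x hx).1]
  · rw [← sub_nonneg, ← map_sub]
    exact hΦ _ fun x hx => by
      simp only [Pi.sub_apply, Pi.mul_apply]
      nlinarith [hf i x hx, (hp x hx).2]
  · rw [← map_sum, ← Finset.sum_mul]

variable [Finite n]

theorem convex_intervalSum : Convex ℝ (intervalSum F) := by
  cases nonempty_fintype n
  exact convex_sum _ fun _ _ => convex_Icc _ _

theorem smul_mem_intervalSum {r s : ℝ} (hW : s • W ∈ intervalSum F) (hrs : |r| ≤ s) :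
    r • W ∈ intervalSum F := by
  cases nonempty_fintype n
  obtain ⟨Z, hZ, hsum⟩ := mem_intervalSum_iff.1 hW
  have hs : 0 ≤ s := (abs_nonneg r).trans hrs
  have hratio : |r / s| ≤ 1 := by
    rw [abs_div, abs_of_nonneg hs]
    exact div_le_one_of_le₀ hrs hs
  refine mem_intervalSum_iff.2 ⟨fun i => (r / s) • Z i,
    fun i => smul_mem_Icc_neg (hZ i)
      (smul_le_of_le_one_left (nonneg_of_mem_Icc_neg (hZ i)) hratio), ?_⟩
  rw [← Finset.smul_sum, hsum, smul_smul,
    div_mul_cancel_of_imp fun h => abs_nonpos_iff.1 (h ▸ hrs)]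

/- Test `F + Z` on `(α, -1)` and `F - Z` on `(α, 1)` in the coordinates `u, v`: in the sum of the
two quadratic forms the off-diagonal entries of `F` and the diagonal entries of `Z` cancel. -/
theorem apply_le_sqrt_of_mem_Icc_neg {F Z : Matrix n n ℝ}
    (hZ : Z ∈ Set.Icc (-F) F) (u v : n) : Z u v ≤ √(F u u * F v v) := by
  classical
  cases nonempty_fintype n
  have hsymm : Z v u = Z u v := (isSymm_of_mem_Icc_neg hZ).apply u v
  have hquad (α : ℝ) : 0 ≤ F u u * (α * α) + -2 * Z u v * α + F v v := by
    have h₁ := (le_iff.1 hZ.1).dotProduct_mulVec_nonneg (Pi.single u α + Pi.single v (-1))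
    have h₂ := (le_iff.1 hZ.2).dotProduct_mulVec_nonneg (Pi.single u α + Pi.single v 1)
    simp only [star_trivial, sub_neg_eq_add, mulVec_add, mulVec_single, op_smul_eq_smul,
      MulOpposite.op_neg, MulOpposite.op_one, neg_smul, one_smul, dotProduct_add, dotProduct_smul,
      add_dotProduct, single_dotProduct, col_apply, Matrix.add_apply, hsymm, neg_mul, one_mul,
      neg_add_rev, smul_eq_mul, dotProduct_neg, neg_neg, Matrix.sub_apply] at h₁ h₂
    linarith
  have hdiscrim := discrim_le_zero hquad
  rw [discrim] at hdiscrim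
  exact Real.le_sqrt_of_sq_le (by linarith)

end IntervalSums

section TwoByTwo

theorem isSymm_X3 (θ : ℝ) : (X3 θ).IsSymm := by
  ext i j
  fin_cases i <;> fin_cases j <;> rfl

theorem X3_add_pi (θ : ℝ) : X3 (θ + Real.pi) = -X3 θ := by
  ext i j
  fin_cases i <;> fin_cases j <;> simp [X3]

theorem trace_X3 (θ : ℝ) : trace (X3 θ) = 0 := by
  simp [X3, trace_fin_two]

theorem trace_X3_mul_X3 (φ θ : ℝ) : trace (X3 φ * X3 θ) = 2 * Real.cos (φ - θ) := by
  rw [X3, X3, mul_fin_two, trace_fin_two_of, Real.cos_sub]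
  ring

theorem det_smul_one_add_smul_X3_add_smul_X3 (a p q φ θ : ℝ) :
    det (a • 1 + p • X3 φ + q • X3 θ) =
      a ^ 2 - (p ^ 2 + q ^ 2 + 2 * p * q * Real.cos (φ - θ)) := by
  rw [det_fin_two, Real.cos_sub]
  simp only [X3, Matrix.add_apply, Matrix.smul_apply, one_apply_eq, smul_eq_mul, of_apply,
    cons_val_zero, cons_val_one, cons_val', cons_val_fin_one, Fin.isValue, one_apply_ne, ne_eq,
    zero_ne_one, one_ne_zero, not_false_eq_true]
  linear_combination -p ^ 2 * Real.sin_sq_add_cos_sq φ - q ^ 2 * Real.sin_sq_add_cos_sq θ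

theorem exists_eq_smul_one_add_smul_X3 {M : Matrix (Fin 2) (Fin 2) ℝ} (hM : M.IsSymm) :
    ∃ l θ : ℝ, 0 ≤ l ∧ M = (trace M / 2) • 1 + l • X3 θ := by
  let z : ℂ := ⟨(M 0 0 - M 1 1) / 2, M 0 1⟩
  have hre : ‖z‖ * Real.cos z.arg = (M 0 0 - M 1 1) / 2 := Complex.norm_mul_cos_arg z
  have him : ‖z‖ * Real.sin z.arg = M 0 1 := Complex.norm_mul_sin_arg z
  refine ⟨‖z‖, z.arg, norm_nonneg z, ?_⟩
  ext i j
  fin_cases i <;> fin_cases j <;> simp [X3, trace_fin_two, hre, him, hM.apply 0 1] <;> ring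

theorem nonneg_fin_two_iff {M : Matrix (Fin 2) (Fin 2) ℝ} (hM : M.IsSymm) :
    0 ≤ M ↔ 0 ≤ trace M ∧ 0 ≤ det M := by
  have hH : M.IsHermitian := hM
  rw [nonneg_iff_posSemidef, hH.posSemidef_iff_eigenvalues_nonneg, hH.trace_eq_sum_eigenvalues,
    hH.det_eq_prod_eigenvalues, Pi.le_def, Fin.forall_fin_two, Fin.sum_univ_two, Fin.prod_univ_two]
  simp only [RCLike.ofReal_real_eq_id, id_eq, Pi.zero_apply]
  refine ⟨fun h => ⟨add_nonneg h.1 h.2, mul_nonneg h.1 h.2⟩, fun ⟨hadd, hmul⟩ => ?_⟩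
  constructor <;> nlinarith [hadd, hmul]

theorem smul_one_add_smul_X3_nonneg_iff {a r θ : ℝ} : 0 ≤ a • 1 + r • X3 θ ↔ |r| ≤ a := by
  have hdet := det_smul_one_add_smul_X3_add_smul_X3 a 0 r 0 θ
  rw [zero_smul, add_zero] at hdet
  rw [nonneg_fin_two_iff ((isSymm_one.smul a).add ((isSymm_X3 θ).smul r)), hdet]
  simp only [trace_add, trace_smul, trace_one, trace_X3, Fintype.card_fin, smul_eq_mul]
  rw [abs_le]
  constructor
  · rintro ⟨ha, hr⟩
    exact abs_le.1 (abs_le_of_sq_le_sq (by linarith) (by norm_num at ha; linarith))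
  · rintro ⟨h₁, h₂⟩
    exact ⟨by norm_num; linarith, by nlinarith⟩

theorem smul_X3_mem_Icc_neg {a r θ : ℝ} (hr : |r| ≤ a) :
    r • X3 θ ∈ Set.Icc (-a • (1 : Matrix (Fin 2) (Fin 2) ℝ)) (a • 1) := by
  constructor
  · rw [neg_smul, ← sub_nonneg, sub_neg_eq_add, add_comm]
    exact smul_one_add_smul_X3_nonneg_iff.2 hr
  · rw [← sub_nonneg, sub_eq_add_neg, ← neg_smul]
    exact smul_one_add_smul_X3_nonneg_iff.2 (by rwa [abs_neg])

theorem X3_mem_Icc (θ : ℝ) : X3 θ ∈ Set.Icc (-1) 1 := by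
  simpa using smul_X3_mem_Icc_neg (a := 1) (r := 1) (θ := θ) (by simp)

theorem Icc_subset_convexHull_range_X3 :
    (Set.Icc (-1) 1 : Set (Matrix (Fin 2) (Fin 2) ℝ)) ⊆
      convexHull ℝ ({1, -1} ∪ Set.range X3) := by
  intro Y hY
  obtain ⟨l, θ, hl, hYeq⟩ := exists_eq_smul_one_add_smul_X3 (isSymm_of_mem_Icc_neg hY)
  set c := trace Y / 2
  have hupper : |-l| ≤ 1 - c := by
    rw [← smul_one_add_smul_X3_nonneg_iff (θ := θ)]
    convert sub_nonneg.2 hY.2 using 1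
    rw [hYeq]
    module
  have hlower : |l| ≤ 1 + c := by
    rw [← smul_one_add_smul_X3_nonneg_iff (θ := θ)]
    convert sub_nonneg.2 hY.1 using 1
    rw [hYeq]
    module
  rw [abs_neg, abs_of_nonneg hl] at hupper
  rw [abs_of_nonneg hl] at hlower
  refine mem_convexHull_of_exists_fintype ![(1 + c - l) / 2, (1 - c - l) / 2, l] ![1, -1, X3 θ]
    ?_ ?_ ?_ ?_
  · have hpos : 0 ≤ (1 + c - l) / 2 ∧ 0 ≤ (1 - c - l) / 2 ∧ 0 ≤ l := by
      refine ⟨?_, ?_, hl⟩ <;> linarith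
    simpa [Fin.forall_fin_succ] using hpos
  · simp only [Fin.sum_univ_three, cons_val]
    ring
  · simp [Fin.forall_fin_succ]
  · simp only [Fin.sum_univ_three, cons_val]
    rw [hYeq]
    module

end TwoByTwo

section NoisyEffects

variable {t b θ : ℝ} {Y : Matrix (Fin 2) (Fin 2) ℝ}

/-- A summand dominated by the noisy effect `t • E + b • 1` of the effect `E = (1 + Y) / 2`; over a
resolution of the identity these summands add up to a multiple of `X3 θ`. On the extreme effects
`E = 0, 1` it is the multiple of `X3 θ` forced by affinity, and on the rank one projections its
scalar part is chosen to make the determinant of `t • E + b • 1 + correction t b θ Y` a square. -/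
noncomputable def correction (t b θ : ℝ) (Y : Matrix (Fin 2) (Fin 2) ℝ) :
    Matrix (Fin 2) (Fin 2) ℝ :=
  (√(b * (b + t)) + (√(b * (b + t)) - b) / 2 * trace Y) • X3 θ +
    (t * √(b * (b + t)) / (t + 2 * b) * (trace (Y * X3 θ) / 2)) • 1

theorem correction_add_pi : correction t b (θ + Real.pi) Y = -correction t b θ Y := by
  simp only [correction, X3_add_pi, mul_neg, trace_neg, smul_neg]
  module

theorem add_correction_one_nonneg (ht : 0 < t) (hb : 0 ≤ b) :
    0 ≤ (t / 2 + b) • 1 + (t / 2) • 1 + correction t b θ 1 := by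
  have hsq : √(b * (b + t)) ^ 2 = b * (b + t) := Real.sq_sqrt (by positivity)
  have hm := Real.sqrt_nonneg (b * (b + t))
  convert smul_one_add_smul_X3_nonneg_iff (a := t + b) (r := 2 * √(b * (b + t)) - b).2 ?_ using 1
  · simp only [correction, trace_one, Fintype.card_fin, Nat.cast_ofNat, one_mul, trace_X3]
    module
  · exact abs_le.2 ⟨by linarith, by nlinarith⟩

theorem add_correction_neg_one_nonneg (hb : 0 ≤ b) :
    0 ≤ (t / 2 + b) • 1 + (t / 2) • (-1) + correction t b θ (-1) := by
  convert smul_one_add_smul_X3_nonneg_iff (a := b) (r := b) (θ := θ).2 (abs_of_nonneg hb).le using 1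
  simp only [correction, trace_neg, trace_one, Fintype.card_fin, Nat.cast_ofNat, neg_mul, one_mul,
    trace_X3, neg_zero]
  module

theorem add_correction_X3_nonneg (ht : 0 < t) (hb : 0 ≤ b) (φ : ℝ) :
    0 ≤ (t / 2 + b) • 1 + (t / 2) • X3 φ + correction t b θ (X3 φ) := by
  set m := √(b * (b + t)) with hm
  have hsq : m ^ 2 = b * (b + t) := Real.sq_sqrt (by positivity)
  set s := t * m / (t + 2 * b) * Real.cos (φ - θ) with hs
  have hsum : (t / 2 + b) • 1 + (t / 2) • X3 φ + correction t b θ (X3 φ) =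
      (t / 2 + b + s) • 1 + (t / 2) • X3 φ + m • X3 θ := by
    simp only [correction, trace_X3, trace_X3_mul_X3, ← hm, hs]
    module
  have hsymm : ((t / 2 + b + s) • 1 + (t / 2) • X3 φ + m • X3 θ).IsSymm :=
    ((isSymm_one.smul _).add ((isSymm_X3 φ).smul _)).add ((isSymm_X3 θ).smul _)
  rw [hsum, nonneg_fin_two_iff hsymm, det_smul_one_add_smul_X3_add_smul_X3]
  constructor
  · have hm_le : m ≤ t / 2 + b := Real.sqrt_le_iff.2 ⟨by positivity, by nlinarith⟩
    have hs_le : -s ≤ t / 2 + b := calc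
      -s = t * m / (t + 2 * b) * -Real.cos (φ - θ) := by ring
      _ ≤ t * m / (t + 2 * b) * 1 := by
        gcongr
        linarith [Real.neg_one_le_cos (φ - θ)]
      _ = t / (t + 2 * b) * m := by ring
      _ ≤ 1 * m := by
        gcongr
        exact div_le_one_of_le₀ (by linarith) (by positivity)
      _ ≤ t / 2 + b := by linarith
    simp only [trace_add, trace_smul, trace_one, trace_X3, Fintype.card_fin, smul_eq_mul]
    norm_num
    linarith
  · have hs_mul : s * (t + 2 * b) = t * m * Real.cos (φ - θ) := by
      rw [hs]
      field_simp
    have hdet : (t / 2 + b + s) ^ 2 -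
        ((t / 2) ^ 2 + m ^ 2 + 2 * (t / 2) * m * Real.cos (φ - θ)) = s ^ 2 := by
      linear_combination hs_mul - hsq
    exact hdet ▸ sq_nonneg s

theorem add_correction_nonneg (ht : 0 < t) (hb : 0 ≤ b) (hY : Y ∈ Set.Icc (-1) 1) :
    0 ≤ (t / 2 + b) • 1 + (t / 2) • Y + correction t b θ Y := by
  let S := {Y | 0 ≤ (t / 2 + b) • 1 + (t / 2) • Y + correction t b θ Y}
  have hconvex : Convex ℝ S := by
    intro Y hY Z hZ p q hp hq hpq
    simp only [S, Set.mem_ofPred_eq] at hY hZ ⊢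
    have hcomb := add_nonneg (smul_nonneg hp hY) (smul_nonneg hq hZ)
    obtain rfl : q = 1 - p := by linarith
    convert hcomb using 1
    simp only [correction, trace_add, trace_smul, Matrix.add_mul, smul_mul_assoc, smul_eq_mul]
    module
  have hextreme : {1, -1} ∪ Set.range X3 ⊆ S := by
    rintro _ ((rfl | rfl) | ⟨φ, rfl⟩)
    exacts [add_correction_one_nonneg ht hb, add_correction_neg_one_nonneg hb,
      add_correction_X3_nonneg ht hb φ]
  exact convexHull_min hextreme hconvex (Icc_subset_convexHull_range_X3 hY)

theorem correction_mem_Icc_neg (ht : 0 < t) (hb : 0 ≤ b) (hY : Y ∈ Set.Icc (-1) 1) :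
    correction t b θ Y ∈
      Set.Icc (-((t / 2 + b) • 1 + (t / 2) • Y)) ((t / 2 + b) • 1 + (t / 2) • Y) := by
  have hadd := add_correction_nonneg (θ := θ) ht hb hY
  have hsub := add_correction_nonneg (θ := θ + Real.pi) ht hb hY
  rw [correction_add_pi, ← sub_eq_add_neg] at hsub
  exact ⟨neg_le_iff_add_nonneg'.2 hadd, sub_nonneg.1 hsub⟩

variable {ι : Type*} [Fintype ι]

theorem sum_correction {Y : ι → Matrix (Fin 2) (Fin 2) ℝ}
    (hsum : ∑ i, Y i = (2 - Fintype.card ι : ℝ) • 1) :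
    ∑ i, correction t b θ (Y i) =
      ((Fintype.card ι - 2) * b + 2 * √(b * (b + t))) • X3 θ := by
  have htrace : ∑ i, trace (Y i) = 2 * (2 - Fintype.card ι) := by
    rw [← trace_sum, hsum, trace_smul, trace_one, Fintype.card_fin, smul_eq_mul, mul_comm,
      Nat.cast_ofNat]
  have htrace_mul : ∑ i, trace (Y i * X3 θ) = 0 := by
    rw [← trace_sum, ← Finset.sum_mul, hsum, smul_one_mul, trace_smul, trace_X3, smul_zero]
  simp only [correction, Finset.sum_add_distrib, ← Finset.sum_smul, ← Finset.mul_sum,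
    ← Finset.sum_div, htrace, htrace_mul, Finset.sum_const, Finset.card_univ, nsmul_eq_mul]
  module

variable {E : ι → Matrix (Fin 2) (Fin 2) ℝ}

theorem sum_correction_mem_intervalSum (ht : 0 < t) (hb : 0 ≤ b) (hE : ∀ i, 0 ≤ E i)
    (hsum : ∑ i, E i = 1) (θ : ℝ) :
    ((Fintype.card ι - 2) * b + 2 * √(b * (b + t))) • X3 θ ∈
      intervalSum fun i => t • E i + b • 1 := by
  let Y (i) : Matrix (Fin 2) (Fin 2) ℝ := (2 : ℝ) • E i - 1
  have hY_sum : ∑ i, Y i = (2 - Fintype.card ι : ℝ) • 1 := by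
    simp only [Y]
    rw [Finset.sum_sub_distrib, ← Finset.smul_sum, hsum, Finset.sum_const, Finset.card_univ,
      sub_smul, Nat.cast_smul_eq_nsmul]
  refine mem_intervalSum_iff.2 ⟨_, fun i => ?_, sum_correction hY_sum⟩
  have hE_le : E i ≤ 1 := hsum ▸ Finset.single_le_sum (fun j _ => hE j) (Finset.mem_univ i)
  have hY : Y i ∈ Set.Icc (-1) 1 := by
    constructor
    · exact neg_le_sub_iff_le_add.2 (le_add_of_nonneg_left (smul_nonneg zero_le_two (hE i)))
    · rw [sub_le_iff_le_add, ← two_smul ℝ]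
      exact smul_le_smul_of_nonneg_left hE_le zero_le_two
  convert correction_mem_Icc_neg ht hb hY using 2 <;> module

theorem smul_mem_intervalSum_of_pos (ht : 0 < t) (hb : 0 ≤ b) (hE : ∀ i, 0 ≤ E i)
    (hsum : ∑ i, E i = 1) (hle : t ≤ (Fintype.card ι - 2) * b + 2 * √(b * (b + t)))
    (hY : Y ∈ Set.Icc (-1) 1) : t • Y ∈ intervalSum fun i => t • E i + b • 1 := by
  have hF (i) : 0 ≤ t • E i + b • (1 : Matrix (Fin 2) (Fin 2) ℝ) :=
    add_nonneg (smul_nonneg ht.le (hE i)) (smul_nonneg hb zero_le_one)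
  have hone : t • 1 ∈ intervalSum fun i => t • E i + b • 1 := by
    refine smul_mem_intervalSum (s := t + Fintype.card ι * b) ?_ ?_
    · convert sum_mem_intervalSum hF using 1
      rw [Finset.sum_add_distrib, ← Finset.smul_sum, hsum, Finset.sum_const, Finset.card_univ]
      module
    · rw [abs_of_pos ht]
      exact le_add_of_nonneg_right (by positivity)
  have hneg : t • (-1) ∈ intervalSum fun i => t • E i + b • 1 := by
    rw [smul_neg, ← neg_smul]
    exact smul_mem_intervalSum hone (by rw [abs_neg, abs_of_pos ht])
  have hX3 (θ) : t • X3 θ ∈ intervalSum fun i => t • E i + b • 1 :=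
    smul_mem_intervalSum (sum_correction_mem_intervalSum ht hb hE hsum θ)
      (by rwa [abs_of_pos ht])
  have hextreme : {1, -1} ∪ Set.range X3 ⊆ (t • ·) ⁻¹' intervalSum fun i => t • E i + b • 1 := by
    rintro _ ((rfl | rfl) | ⟨θ, rfl⟩)
    exacts [hone, hneg, hX3 θ]
  exact convexHull_min hextreme (convex_intervalSum.smul_preimage t)
    (Icc_subset_convexHull_range_X3 hY)

end NoisyEffects

section ReversedEffects

variable {ι n : Type*} [Fintype ι] [Fintype n] [DecidableEq n]

theorem le_trace_smul_one {E : Matrix n n ℝ} (hE : 0 ≤ E) : E ≤ trace E • 1 := by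
  have hpsd := nonneg_iff_posSemidef.1 hE
  rw [← Algebra.algebraMap_eq_smul_one, le_algebraMap_iff_spectrum_le hpsd.1.isSelfAdjoint,
    hpsd.1.spectrum_real_eq_range_eigenvalues]
  rintro _ ⟨i, rfl⟩
  rw [hpsd.1.trace_eq_sum_eigenvalues]
  exact Finset.single_le_sum (fun j _ => hpsd.eigenvalues_nonneg j) (Finset.mem_univ i)

variable {E : ι → Matrix n n ℝ}

theorem exists_smul_one_le_one_sub (hE : ∀ i, 0 ≤ E i) (hsum : ∑ i, E i = 1)
    (hcard : Fintype.card n < Fintype.card ι) :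
    ∃ w : ι → ℝ, (∀ i, 0 ≤ w i) ∧ (∀ i, w i • 1 ≤ 1 - E i) ∧ 1 ≤ ∑ i, w i := by
  let w (i) : ℝ := max 0 (1 - trace (E i))
  refine ⟨w, fun i => le_max_left _ _, fun i => ?_, ?_⟩
  · rcases max_choice 0 (1 - trace (E i)) with h | h <;> simp only [w, h]
    · rw [zero_smul, sub_nonneg, ← hsum]
      exact Finset.single_le_sum (fun j _ => hE j) (Finset.mem_univ i)
    · rw [sub_smul, one_smul]
      exact sub_le_sub_left (le_trace_smul_one (hE i)) 1
  · calc
      (1 : ℝ) ≤ Fintype.card ι - Fintype.card n := by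
        rw [le_sub_iff_add_le, add_comm]
        exact_mod_cast hcard
      _ = ∑ i, (1 - trace (E i)) := by
        rw [Finset.sum_sub_distrib, ← trace_sum, hsum, trace_one]
        simp
      _ ≤ ∑ i, w i := Finset.sum_le_sum fun i _ => le_max_right _ _

theorem smul_mem_intervalSum_of_nonpos {Y : Matrix n n ℝ} {t b : ℝ} (ht : t ≤ 0) (htb : 0 ≤ b + t)
    (hE : ∀ i, 0 ≤ E i) (hsum : ∑ i, E i = 1) (hcard : Fintype.card n < Fintype.card ι)
    (hY : Y ∈ Set.Icc (-1) 1) : t • Y ∈ intervalSum fun i => t • E i + b • 1 := by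
  obtain ⟨w, hw_nonneg, hw_le, hw_sum⟩ := exists_smul_one_le_one_sub hE hsum hcard
  have hF (i) : |-t * w i| • (1 : Matrix n n ℝ) ≤ t • E i + b • 1 := calc
    |-t * w i| • (1 : Matrix n n ℝ) = -t • w i • 1 := by
      rw [abs_mul, abs_neg, abs_of_nonpos ht, abs_of_nonneg (hw_nonneg i), smul_smul]
    _ ≤ -t • (1 - E i) := smul_le_smul_of_nonneg_left (hw_le i) (neg_nonneg.2 ht)
    _ ≤ -t • (1 - E i) + (b + t) • 1 := le_add_of_nonneg_right (smul_nonneg htb zero_le_one)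
    _ = t • E i + b • 1 := by module
  have hmem : (-t * ∑ i, w i) • Y ∈ intervalSum fun i => t • E i + b • 1 :=
    mem_intervalSum_iff.2 ⟨fun i => (-t * w i) • Y, fun i => smul_mem_Icc_neg hY (hF i), by
      rw [← Finset.sum_smul, Finset.mul_sum]⟩
  refine smul_mem_intervalSum hmem ?_
  rw [abs_of_nonpos ht]
  exact le_mul_of_one_le_right (neg_nonneg.2 ht) hw_sum

end ReversedEffects

section Admissibility

variable {k : ℕ} {t : ℝ}

/-- The weight of the identity in each of the `k + 1` effects that remain when a resolution of the
identity is shrunk by the factor `t` towards the uniform one. -/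
noncomputable def noise (k : ℕ) (t : ℝ) : ℝ :=
  (1 - t) / (k + 1)

/-- The scaling factors `t` for which every `2 × 2` matrix tuple of the free spectrahedron of
`Amat k` enters the minimal matrix convex set after multiplication by `t`. The first two fields ask
that `diagonal ![noise k t, noise k t + t]` be positive semidefinite, and the third bounds the
off-diagonal entry of `t • X3 (π / 2)`. -/
structure Admissible (k : ℕ) (t : ℝ) : Prop where
  noise_nonneg : 0 ≤ noise k t
  noise_add_nonneg : 0 ≤ noise k t + t
  le : t ≤ (k - 1) * noise k t + 2 * √(noise k t * (noise k t + t))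

theorem Admissible.smul_mem_intervalSum (ht : Admissible k t) (hk : 2 ≤ k)
    {E : Fin (k + 1) → Matrix (Fin 2) (Fin 2) ℝ} {Y : Matrix (Fin 2) (Fin 2) ℝ}
    (hE : ∀ i, 0 ≤ E i) (hsum : ∑ i, E i = 1) (hY : Y ∈ Set.Icc (-1) 1) :
    t • Y ∈ intervalSum fun i => t • E i + noise k t • 1 := by
  rcases le_or_gt t 0 with ht0 | ht0
  · refine smul_mem_intervalSum_of_nonpos ht0 ht.noise_add_nonneg hE hsum ?_ hY
    rw [Fintype.card_fin, Fintype.card_fin]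
    lia
  · refine smul_mem_intervalSum_of_pos ht0 ht.noise_nonneg hE hsum ?_ hY
    convert ht.le using 3
    rw [Fintype.card_fin]
    push_cast
    ring

end Admissibility

section PrismOverSimplex

variable {k : ℕ} {R : Type*} [Ring R] [Algebra ℝ R]

/-- The barycentric coordinates of the first `k` entries of `X` with respect to the simplex cut out
by `X j ≤ 1` and `-1 ≤ ∑ j, X j`; the entries are numbers or matrices. -/
noncomputable def bary (X : Fin (k + 1) → R) : Fin (k + 1) → R :=
  ((k : ℝ) + 1)⁻¹ • Fin.snoc (fun j : Fin k => 1 - X j.castSucc) (1 + ∑ j : Fin k, X j.castSucc)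

theorem bary_castSucc (X : Fin (k + 1) → R) (j : Fin k) :
    bary X j.castSucc = ((k : ℝ) + 1)⁻¹ • (1 - X j.castSucc) := by
  rw [bary, Pi.smul_apply, Fin.snoc_castSucc]

theorem bary_last (X : Fin (k + 1) → R) :
    bary X (Fin.last k) = ((k : ℝ) + 1)⁻¹ • (1 + ∑ j : Fin k, X j.castSucc) := by
  rw [bary, Pi.smul_apply, Fin.snoc_last]

theorem sum_bary (X : Fin (k + 1) → R) : ∑ i, bary X i = 1 := by
  have hk : (k : ℝ) + 1 ≠ 0 := by positivity
  rw [Fin.sum_univ_castSucc]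
  simp only [bary_castSucc, bary_last]
  rw [← Finset.smul_sum, ← smul_add, inv_smul_eq_iff₀ hk, Finset.sum_sub_distrib, Finset.sum_const,
    Finset.card_univ, Fintype.card_fin]
  module

theorem bary_smul (t : ℝ) (X : Fin (k + 1) → R) (i : Fin (k + 1)) :
    bary (t • X) i = t • bary X i + noise k t • 1 := by
  refine Fin.lastCases ?_ (fun j => ?_) i
  · simp only [bary_last, noise, Pi.smul_apply, ← Finset.smul_sum]
    module
  · simp only [bary_castSucc, noise, Pi.smul_apply]
    module

theorem one_sub_sum_Amat_smul (X : Fin (k + 1) → R) :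
    (fun i => 1 - ∑ j, Amat k j i i • X j) =
      Fin.snoc (Fin.snoc (((k : ℝ) + 1) • bary X) (1 + X (Fin.last k)) : Fin (k + 2) → R)
        (1 - X (Fin.last k)) := by
  have hk : (k : ℝ) + 1 ≠ 0 := by positivity
  have hne (j : Fin k) : (j : ℕ) ≠ k ∧ (j : ℕ) ≠ k + 1 ∧ (j : ℕ) ≠ k + 2 := by lia
  refine funext ?_
  simp only [Fin.sum_univ_castSucc]
  refine Fin.lastCases ?_ (Fin.lastCases ?_ (Fin.lastCases ?_ fun i => ?_))
  · simp [Amat, fun j => (hne j).2.2.symm]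
  · simp [Amat, fun j => (hne j).2.1.symm]
  · simp [Amat, bary_last, hk, fun j => (hne j).1.symm]
  · simp [Amat, bary_castSucc, hk, hne, Fin.val_inj]

theorem forall_one_sub_sum_Amat_smul_nonneg_iff [PartialOrder R] [IsOrderedAddMonoid R]
    [PosSMulMono ℝ R] [PosSMulReflectLE ℝ R] {X : Fin (k + 1) → R} :
    (∀ i, 0 ≤ 1 - ∑ j, Amat k j i i • X j) ↔
      (∀ i, 0 ≤ bary X i) ∧ X (Fin.last k) ∈ Set.Icc (-1) 1 := by
  have hk : (0 : ℝ) < k + 1 := by positivity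
  simp only [funext_iff.1 (one_sub_sum_Amat_smul X)]
  rw [Fin.forall_fin_succ', Fin.forall_fin_succ']
  simp only [Fin.snoc_castSucc, Fin.snoc_last, Pi.smul_apply, smul_nonneg_iff_nonneg_of_pos_left hk]
  rw [and_assoc, Set.mem_Icc, neg_le_iff_add_nonneg', sub_nonneg]

theorem isDiag_Amat (j : Fin (k + 1)) : (Amat k j).IsDiag :=
  isDiag_diagonal _

theorem mem_level1_Amat_iff {x : Fin (k + 1) → ℝ} :
    x ∈ level1 (Amat k) ↔ (∀ i, 0 ≤ bary x i) ∧ x (Fin.last k) ∈ Set.Icc (-1) 1 :=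
  (mem_level1_iff_of_isDiag isDiag_Amat).trans forall_one_sub_sum_Amat_smul_nonneg_iff

theorem memLevel_Amat_iff {n : Type*} [Fintype n] [DecidableEq n]
    {X : Fin (k + 1) → Matrix n n ℝ} :
    memLevel (Amat k) X ↔
      (∀ j, (X j).IsSymm) ∧ (∀ i, 0 ≤ bary X i) ∧ X (Fin.last k) ∈ Set.Icc (-1) 1 :=
  (memLevel_iff_of_isDiag isDiag_Amat).trans
    (and_congr_right' forall_one_sub_sum_Amat_smul_nonneg_iff)

/-- The `i`-th vertex of the simplex described by `bary`, completed by the last entry `ε`. -/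
def prismVertex (i : Fin (k + 1)) (ε : ℝ) : Fin (k + 1) → ℝ :=
  Fin.snoc (fun j : Fin k => if j.castSucc = i then -(k : ℝ) else 1) ε

theorem prismVertex_last (i : Fin (k + 1)) (ε : ℝ) : prismVertex i ε (Fin.last k) = ε :=
  Fin.snoc_last ..

theorem prismVertex_castSucc (i : Fin (k + 1)) (ε : ℝ) (j : Fin k) :
    prismVertex i ε j.castSucc = if j.castSucc = i then -(k : ℝ) else 1 :=
  Fin.snoc_castSucc ..

theorem bary_prismVertex (i : Fin (k + 1)) (ε : ℝ) : bary (prismVertex i ε) = Pi.single i 1 := by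
  have hk : (k : ℝ) + 1 ≠ 0 := by positivity
  have hcastSucc (j : Fin k) : bary (prismVertex i ε) j.castSucc =
      (Pi.single i 1 : Fin (k + 1) → ℝ) j.castSucc := by
    rw [bary_castSucc, prismVertex_castSucc, Pi.single_apply]
    split_ifs
    · rw [smul_eq_mul, sub_neg_eq_add, add_comm 1, inv_mul_cancel₀ hk]
    · rw [sub_self, smul_zero]
  have hsum : ∑ j, bary (prismVertex i ε) j = ∑ j, (Pi.single i 1 : Fin (k + 1) → ℝ) j := by
    rw [sum_bary, Finset.sum_pi_single' i 1, if_pos (Finset.mem_univ i)]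
  rw [Fin.sum_univ_castSucc, Fin.sum_univ_castSucc, Finset.sum_congr rfl fun j _ => hcastSucc j,
    add_right_inj] at hsum
  exact funext (Fin.lastCases hsum hcastSucc)

theorem prismVertex_mem_level1_Amat (i : Fin (k + 1)) {ε : ℝ} (hε : ε ∈ Set.Icc (-1) 1) :
    prismVertex i ε ∈ level1 (Amat k) := by
  rw [mem_level1_Amat_iff, bary_prismVertex, prismVertex_last]
  have hsingle : 0 ≤ (Pi.single i 1 : Fin (k + 1) → ℝ) := Pi.single_nonneg.2 zero_le_one
  exact ⟨hsingle, hε⟩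

theorem sum_prismVertex_smul_bary {X : Fin (k + 1) → R} (ε : ℝ) (j : Fin k) :
    ∑ i, prismVertex i ε j.castSucc • bary X i = X j.castSucc := by
  have hk : (k : ℝ) + 1 ≠ 0 := by positivity
  have hcoeff (i : Fin (k + 1)) : prismVertex i ε j.castSucc • bary X i =
      bary X i - if j.castSucc = i then ((k : ℝ) + 1) • bary X i else 0 := by
    rw [prismVertex_castSucc]
    split_ifs <;> module
  rw [Finset.sum_congr rfl fun i _ => hcoeff i, Finset.sum_sub_distrib, sum_bary,
    Finset.sum_ite_eq, if_pos (Finset.mem_univ _), bary_castSucc, smul_inv_smul₀ hk, sub_sub_cancel]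

theorem memWmin_level1_Amat_of_mem_intervalSum {n : ℕ} {X : Fin (k + 1) → Matrix (Fin n) (Fin n) ℝ}
    (hX : X (Fin.last k) ∈ intervalSum (bary X)) : memWmin (level1 (Amat k)) X := by
  obtain ⟨Z, hZ, hZ_sum⟩ := mem_intervalSum_iff.1 hX
  refine memWmin_of_fintype (ι := Fin (k + 1) ⊕ Fin (k + 1))
    (x := Sum.elim (prismVertex · 1) (prismVertex · (-1)))
    (P := Sum.elim (fun i => (2⁻¹ : ℝ) • (bary X i + Z i)) fun i => (2⁻¹ : ℝ) • (bary X i - Z i))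
    (Sum.forall.2 ⟨fun i => ?_, fun i => ?_⟩) (Sum.forall.2 ⟨fun i => ?_, fun i => ?_⟩) ?_
    fun j => ?_
  · exact prismVertex_mem_level1_Amat i (by norm_num)
  · exact prismVertex_mem_level1_Amat i (by norm_num)
  · exact smul_nonneg (by norm_num) (neg_le_iff_add_nonneg'.1 (hZ i).1)
  · exact smul_nonneg (by norm_num) (sub_nonneg.2 (hZ i).2)
  · simp only [Fintype.sum_sum_type, Sum.elim_inl, Sum.elim_inr, ← Finset.sum_add_distrib]
    rw [← sum_bary X]
    exact Finset.sum_congr rfl fun i _ => by module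
  · simp only [Fintype.sum_sum_type, Sum.elim_inl, Sum.elim_inr, ← Finset.sum_add_distrib]
    refine Fin.lastCases ?_ (fun j => ?_) j
    · simp only [prismVertex_last]
      rw [← hZ_sum]
      exact Finset.sum_congr rfl fun i _ => by module
    · rw [← sum_prismVertex_smul_bary (X := X) 0 j]
      refine Finset.sum_congr rfl fun i _ => ?_
      simp only [prismVertex_castSucc]
      module

end PrismOverSimplex

section EdgeTriples

variable {k : ℕ} {t : ℝ}

theorem isDiag_Smat (j : Fin 3) : (Smat k j).IsDiag := by
  fin_cases j <;> exact isDiag_diagonal _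

theorem mem_level1_Smat_iff (hk : 2 ≤ k) {x : Fin 3 → ℝ} :
    x ∈ level1 (Smat k) ↔
      x 0 ≤ 1 ∧ x 1 ≤ 1 ∧ 0 ≤ (k - 1) + x 0 + x 1 ∧ x 2 ∈ Set.Icc (-1) 1 := by
  have hk' : (0 : ℝ) < k - 1 := by
    have : (2 : ℝ) ≤ k := by exact_mod_cast hk
    linarith
  have hfaces : (fun i => 1 - ∑ j, Smat k j i i • x j) =
      ![1 - x 0, 1 - x 1, (k - 1 : ℝ)⁻¹ * ((k - 1) + x 0 + x 1), x 2 - -1, 1 - x 2] := by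
    funext i
    fin_cases i <;> simp [Fin.sum_univ_three, Smat, mul_add, hk'.ne'] <;> ring
  rw [mem_level1_iff_of_isDiag isDiag_Smat]
  simp only [funext_iff.1 hfaces, Fin.forall_fin_succ, Fin.forall_fin_zero, cons_val_zero,
    cons_val_succ, sub_nonneg, mul_nonneg_iff_of_pos_left (inv_pos.2 hk'), and_true, Set.mem_Icc]

theorem apply_two_mem_intervalSum_of_memWmin_Smat (hk : 2 ≤ k) {n : ℕ}
    {X : Fin 3 → Matrix (Fin n) (Fin n) ℝ} (hX : memWmin (level1 (Smat k)) X) :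
    X 2 ∈ intervalSum (((k : ℝ) + 1)⁻¹ • ![1 - X 0, 1 - X 1, (k - 1 : ℝ) • 1 + X 0 + X 1]) := by
  obtain ⟨Φ, hΦ_nonneg, hΦ_one, hΦ_coord⟩ := hX.exists_positive_unital_map
  let c (j : Fin 3) (x : Fin 3 → ℝ) : ℝ := x j
  let f : Fin 3 → (Fin 3 → ℝ) → ℝ :=
    ((k : ℝ) + 1)⁻¹ • ![1 - c 0, 1 - c 1, (k - 1 : ℝ) • 1 + c 0 + c 1]
  have hf (i) : ∀ x ∈ level1 (Smat k), 0 ≤ f i x := by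
    intro x hx
    obtain ⟨h0, h1, h01, -⟩ := (mem_level1_Smat_iff hk).1 hx
    refine smul_nonneg (inv_nonneg.2 (by positivity : (0 : ℝ) ≤ k + 1)) ?_
    fin_cases i
    exacts [sub_nonneg.2 h0, sub_nonneg.2 h1, by simpa [c] using h01]
  have hf_sum : ∑ i, f i = 1 := by
    have hk : (k : ℝ) + 1 ≠ 0 := by positivity
    simp only [f, Fin.sum_univ_three, Pi.smul_apply, cons_val]
    rw [← smul_add, ← smul_add, inv_smul_eq_iff₀ hk]
    module
  have hp (x) (hx : x ∈ level1 (Smat k)) : c 2 x ∈ Set.Icc (-1) 1 :=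
    ((mem_level1_Smat_iff hk).1 hx).2.2.2
  have hmem := map_sum_mul_mem_intervalSum hΦ_nonneg hf hp
  rw [hf_sum, one_mul, hΦ_coord] at hmem
  convert hmem using 2
  funext i
  fin_cases i <;> simp [f, hΦ_one, c, hΦ_coord]

/-- The test tuple `(diag(1, -k), diag(-k, 1), X3 θ)`: the first two matrices record two vertices of
the simplex with `k + 1` vertices, spanning an edge, along the diagonal. -/
noncomputable def edgeTriple (k : ℕ) (θ : ℝ) (j : Fin 3) : Matrix (Fin 2) (Fin 2) ℝ :=
  if j = 0 then !![(1 : ℝ), 0; 0, -(k : ℝ)]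
  else if j = 1 then !![-(k : ℝ), 0; 0, 1]
  else X3 θ

theorem admissible_of_mem_intervalSum (hk : 1 ≤ k)
    (h : t • X3 (Real.pi / 2) ∈ intervalSum ![diagonal ![noise k t, noise k t + t],
      diagonal ![noise k t + t, noise k t], ((k - 1) * noise k t) • 1]) : Admissible k t := by
  obtain ⟨Z, hZ, hsum⟩ := mem_intervalSum_iff.1 h
  have hZ01 (i) := apply_le_sqrt_of_mem_Icc_neg (hZ i) 0 1
  have hF : (0 : Matrix (Fin 2) (Fin 2) ℝ) ≤ diagonal ![noise k t, noise k t + t] :=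
    nonneg_of_mem_Icc_neg (hZ 0)
  have hdiag := posSemidef_diagonal_iff.1 (nonneg_iff_posSemidef.1 hF)
  have hk' : (0 : ℝ) ≤ k - 1 := by
    have : (1 : ℝ) ≤ k := by exact_mod_cast hk
    linarith
  have hnoise : 0 ≤ noise k t := hdiag 0
  refine ⟨hnoise, hdiag 1, ?_⟩
  have h₀ : Z 0 0 1 ≤ √(noise k t * (noise k t + t)) := by simpa using hZ01 0
  have h₁ : Z 1 0 1 ≤ √(noise k t * (noise k t + t)) := by simpa [mul_comm] using hZ01 1
  have h₂ : Z 2 0 1 ≤ √((k - 1) * noise k t * ((k - 1) * noise k t)) := by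
    simpa using hZ01 2
  rw [Real.sqrt_mul_self (mul_nonneg hk' hnoise)] at h₂
  have ht : Z 0 0 1 + Z 1 0 1 + Z 2 0 1 = t := by
    have := congrFun₂ hsum 0 1
    simpa [Fin.sum_univ_three, X3] using this
  linarith

theorem smul_edgeTriple_faces (θ : ℝ) :
    ((k : ℝ) + 1)⁻¹ • ![1 - (t • edgeTriple k θ) 0, 1 - (t • edgeTriple k θ) 1,
        (k - 1 : ℝ) • 1 + (t • edgeTriple k θ) 0 + (t • edgeTriple k θ) 1] =
      ![diagonal ![noise k t, noise k t + t], diagonal ![noise k t + t, noise k t],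
        ((k - 1) * noise k t) • 1] := by
  have hk : (k : ℝ) + 1 ≠ 0 := by positivity
  funext i
  ext u v
  fin_cases i <;> fin_cases u <;> fin_cases v <;> simp [edgeTriple, noise] <;> field_simp <;> ring

theorem ne_zero_and_admissible_of_memWmin_edgeTriple (hk : 2 ≤ k) {γ : ℝ}
    (h : memWmin (γ • level1 (Smat k)) (edgeTriple k (Real.pi / 2))) :
    γ ≠ 0 ∧ Admissible k γ⁻¹ := by
  have hγ : γ ≠ 0 := by
    rintro rfl
    have hentry := congrFun₂ (congrFun h.eq_zero_of_zero_smul 0) 0 0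
    simp [edgeTriple] at hentry
  have hmem := apply_two_mem_intervalSum_of_memWmin_Smat hk ((memWmin_smul_iff hγ).1 h)
  rw [smul_edgeTriple_faces] at hmem
  exact ⟨hγ, admissible_of_mem_intervalSum (by lia) hmem⟩

theorem Admissible.memWmin_smul_level1_Amat {γ : ℝ} (h : Admissible k γ⁻¹) (hγ : γ ≠ 0)
    (hk : 2 ≤ k) {X : Fin (k + 1) → Matrix (Fin 2) (Fin 2) ℝ} (hX : memLevel (Amat k) X) :
    memWmin (γ • level1 (Amat k)) X := by
  obtain ⟨-, hbary, hlast⟩ := memLevel_Amat_iff.1 hX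
  refine (memWmin_smul_iff hγ).2 (memWmin_level1_Amat_of_mem_intervalSum ?_)
  rw [funext (bary_smul γ⁻¹ X)]
  exact h.smul_mem_intervalSum hk hbary (sum_bary X) hlast

theorem comp_mem_level1_Smat {m : ℕ} {x : Fin (m + 3) → ℝ} (hx : x ∈ level1 (Amat (m + 2))) :
    x ∘ ![Fin.castSucc 0, Fin.castSucc 1, Fin.last (m + 2)] ∈ level1 (Smat (m + 2)) := by
  have hk : (0 : ℝ) < ((m + 2 : ℕ) + 1 : ℝ)⁻¹ := by positivity
  obtain ⟨hbary, hlast⟩ := mem_level1_Amat_iff.1 hx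
  have hle (j : Fin (m + 2)) : x j.castSucc ≤ 1 := by
    have := hbary j.castSucc
    rwa [bary_castSucc, smul_nonneg_iff_nonneg_of_pos_left hk, sub_nonneg] at this
  have hsum : 0 ≤ 1 + ∑ j : Fin (m + 2), x j.castSucc := by
    have := hbary (Fin.last (m + 2))
    rwa [bary_last, smul_nonneg_iff_nonneg_of_pos_left hk] at this
  have hrest : ∑ j : Fin m, x j.succ.succ.castSucc ≤ m := by
    simpa only [Finset.card_univ, Fintype.card_fin, nsmul_one] using
      Finset.sum_le_card_nsmul Finset.univ _ 1 fun (j : Fin m) _ => hle j.succ.succ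
  rw [Fin.sum_univ_succ, Fin.sum_univ_succ] at hsum
  refine (mem_level1_Smat_iff (by lia)).2 ⟨hle 0, hle 1, ?_, hlast⟩
  have hthird : 0 ≤ ((m + 2 : ℕ) - 1 : ℝ) + x (Fin.castSucc 0) + x (Fin.succ 0).castSucc := by
    push_cast
    linarith
  exact hthird

theorem edgeTriple_zero (θ : ℝ) : edgeTriple k θ 0 = diagonal ![1, -(k : ℝ)] :=
  (diagonal_vec2 ..).symm

theorem edgeTriple_one (θ : ℝ) : edgeTriple k θ 1 = diagonal ![-(k : ℝ), 1] :=
  (diagonal_vec2 ..).symm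

theorem memLevel_Amat_snoc_edgeTriple (m : ℕ) (θ : ℝ) :
    memLevel (Amat (m + 2)) (Fin.snoc (Fin.cons (edgeTriple (m + 2) θ 0)
      (Fin.cons (edgeTriple (m + 2) θ 1) fun _ => 1)) (X3 θ)) := by
  set C : Fin (m + 2) → Matrix (Fin 2) (Fin 2) ℝ :=
    Fin.cons (edgeTriple (m + 2) θ 0) (Fin.cons (edgeTriple (m + 2) θ 1) fun _ => 1) with hC
  have hsymm : ∀ j, (C j).IsSymm := by
    rw [hC, edgeTriple_zero, edgeTriple_one]
    exact Fin.cases (isSymm_diagonal _) (Fin.cases (isSymm_diagonal _) fun _ => isSymm_one)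
  have hle : ∀ j, C j ≤ 1 := by
    have hneg : -((m + 2 : ℕ) : ℝ) ≤ 1 := by linarith [Nat.cast_nonneg (α := ℝ) (m + 2)]
    rw [hC, edgeTriple_zero, edgeTriple_one]
    refine Fin.cases ?_ (Fin.cases ?_ fun j => ?_)
    · exact diagonal_le_one (Fin.forall_fin_two.2 ⟨le_rfl, hneg⟩)
    · exact diagonal_le_one (Fin.forall_fin_two.2 ⟨hneg, le_rfl⟩)
    · exact le_rfl
  have hsum : 1 + ∑ j, C j = 0 := by
    rw [hC, edgeTriple_zero, edgeTriple_one, Fin.sum_univ_succ, Fin.sum_univ_succ]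
    simp only [Fin.cons_zero, Fin.cons_succ, Finset.sum_const, Finset.card_univ, Fintype.card_fin,
      ← Nat.cast_smul_eq_nsmul ℝ m]
    ext u v
    fin_cases u <;> fin_cases v <;> simp <;> ring
  refine memLevel_Amat_iff.2 ⟨fun i => ?_, fun i => ?_, ?_⟩
  · cases i using Fin.lastCases with
    | last => rw [Fin.snoc_last]; exact isSymm_X3 θ
    | cast j => rw [Fin.snoc_castSucc]; exact hsymm j
  · cases i using Fin.lastCases with
    | last => simp only [bary_last, Fin.snoc_castSucc, hsum, smul_zero, le_refl]
    | cast j =>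
      rw [bary_castSucc, Fin.snoc_castSucc]
      exact smul_nonneg (by positivity) (sub_nonneg.2 (hle j))
  · rw [Fin.snoc_last]
    exact X3_mem_Icc θ

theorem memWmin_edgeTriple_of_forall_memLevel (hk : 2 ≤ k) {γ : ℝ}
    (h : ∀ X : Fin (k + 1) → Matrix (Fin 2) (Fin 2) ℝ,
      memLevel (Amat k) X → memWmin (γ • level1 (Amat k)) X) (θ : ℝ) :
    memWmin (γ • level1 (Smat k)) (edgeTriple k θ) := by
  obtain ⟨m, rfl⟩ := Nat.exists_eq_add_of_le' hk
  have hmem := (h _ (memLevel_Amat_snoc_edgeTriple m θ)).comp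
    (L := γ • level1 (Smat (m + 2))) ![Fin.castSucc 0, Fin.castSucc 1, Fin.last (m + 2)] ?_
  · convert hmem using 1
    funext j
    fin_cases j
    exacts [rfl, rfl, (Fin.snoc_last (α := fun _ => Matrix (Fin 2) (Fin 2) ℝ) (X3 θ) _).symm]
  · rintro _ ⟨x, hx, rfl⟩
    exact ⟨_, comp_mem_level1_Smat hx, rfl⟩

end EdgeTriples

theorem stmt_4_general (k : ℕ) (hk : 2 ≤ k) (γ : ℝ) :
    List.TFAE [
      ∀ θ, memWmin (γ • level1 (Smat k)) (edgeTriple k θ),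
      memWmin (γ • level1 (Smat k)) (edgeTriple k (Real.pi / 2)),
      γ ≠ 0 ∧ Admissible k γ⁻¹,
      ∀ X : Fin (k + 1) → Matrix (Fin 2) (Fin 2) ℝ,
        memLevel (Amat k) X → memWmin (γ • level1 (Amat k)) X] := by
  tfae_have 1 → 2 := fun h => h _
  tfae_have 2 → 3 := ne_zero_and_admissible_of_memWmin_edgeTriple hk
  tfae_have 3 → 4 := fun ⟨hγ, h⟩ _ => h.memWmin_smul_level1_Amat hγ hk
  tfae_have 4 → 1 := memWmin_edgeTriple_of_forall_memLevel hk
  tfae_finish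

end LoewnerOrder

/-- For `k ≥ 3` and any `γ ∈ ℝ`, the membership of the triples
`(diag(1,−k), diag(−k,1), X_3(θ))` (for all `θ ∈ [0,π/2]`) in level 2 of `γ·W^min(D_S^ℝ(1))`
is equivalent to `D_{A(k)}^ℝ(2) ⊆` level 2 of `γ·W^min(D_{A(k)}^ℝ(1))`. -/
theorem stmt_4 (k : ℕ) (hk : 3 ≤ k) (γ : ℝ) :
    (∀ θ ∈ Set.Icc (0 : ℝ) (Real.pi / 2),
        memWmin (γ • level1 (Smat k))
          (fun j : Fin 3 =>
            if j = 0 then !![(1 : ℝ), 0; 0, -(k : ℝ)]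
            else if j = 1 then !![-(k : ℝ), 0; 0, 1]
            else X3 θ)) ↔
    ∀ X : Fin (k + 1) → Matrix (Fin 2) (Fin 2) ℝ,
      memLevel (Amat k) X → memWmin (γ • level1 (Amat k)) X := by
  have hTFAE := stmt_4_general k (by lia) γ
  exact ⟨fun h => (hTFAE.out 1 3).1 (h _ ⟨by positivity, le_rfl⟩),
    fun h θ _ => (hTFAE.out 3 0 rfl rfl).1 h θ⟩
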